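/- For every hypergraph G, there exists a hierarchy decomposition T of G whose width equals the hierarchy width of G: w(T) = hw(G). -/

import Mathlib

/-- Connectivity relation between hyperedges within the edge set `E` of a hypergraph whose
hyperedges have vertex sets given by `dep`. -/
def EdgeConn {α ι : Type*} (dep : ι → Finset α) (E : Finset ι) : ι → ι → Prop :=
  Relation.ReflTransGen fun a b => a ∈ E ∧ b ∈ E ∧ ∃ v, v ∈ dep a ∧ v ∈ dep b

open Classical in
/-- Hierarchy width of the hypergraph with hyperedges `E`, where hyperedge `e` consists of
the vertices `dep e`: `0` if there are no hyperedges; `1 +` the minimum over single-edge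
removals for a connected hypergraph; the maximum over connected components otherwise. -/
noncomputable def hw {α ι : Type*} [DecidableEq ι] (dep : ι → Finset α) (E : Finset ι) : ℕ :=
  E.sup fun e =>
    1 + ((E.filter fun f => EdgeConn dep E e f).attach.inf fun f =>
      ((hw dep ((E.filter fun f => EdgeConn dep E e f).erase f.1) : ℕ∞))).toNat
termination_by E.card
decreasing_by
  exact lt_of_lt_of_le (Finset.card_erase_lt_of_mem f.2)
    (Finset.card_le_card (Finset.filter_subset _ _))

/-- A hierarchy decomposition of the hypergraph with hyperedges `E` (hyperedge `e` has
vertex set `dep e`): a rooted tree whose nodes `v` are labeled with sets `χ v` of hyperedges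
such that (1) every hyperedge occurs in some label, (2) the nodes whose labels contain a
given hyperedge are connected along tree paths, (3) any two intersecting hyperedges occur
together in some label, and (4) the label of a parent is contained in the label of each of
its children (a node `u` is the parent of `v` if they are adjacent and `u` lies on the
unique path from `v` to the root). -/
structure HierDecomp {α ι : Type*} (dep : ι → Finset α) (E : Finset ι) where
  τ : Type
  fin : Fintype τ
  T : SimpleGraph τ
  tree : T.IsTree
  root : τ
  χ : τ → Finset ι
  sub : ∀ v, χ v ⊆ E
  cover : ∀ e ∈ E, ∃ v, e ∈ χ v
  pathconn : ∀ e : ι, ∀ u v : τ, e ∈ χ u → e ∈ χ v →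
    ∀ p : T.Walk u v, p.IsPath → ∀ w ∈ p.support, e ∈ χ w
  meet : ∀ e ∈ E, ∀ f ∈ E, (∃ a, a ∈ dep e ∧ a ∈ dep f) → ∃ v, e ∈ χ v ∧ f ∈ χ v
  parentMono : ∀ u v : τ, T.Adj u v →
    (∀ p : T.Walk v root, p.IsPath → u ∈ p.support) → χ u ⊆ χ v

/-- The width of a hierarchy decomposition: the size of its largest label. -/
noncomputable def HierDecomp.width {α ι : Type*} {dep : ι → Finset α} {E : Finset ι}
    (D : HierDecomp dep E) : ℕ :=
  letI := D.fin
  Finset.univ.sup fun v => (D.χ v).card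

/-! The hierarchy width is the tree-depth of the intersection graph of the hyperedges. Following its
recursion, we build a family of sets of hyperedges (the root-to-node sets of an optimal elimination
forest): the family of a connected hypergraph is obtained from that of an optimal edge-deletion by
inserting the deleted hyperedge into every member, and the family of a disconnected hypergraph is
the union of those of its components. Ordered by inclusion, the members below a given one form a
chain, so the Hasse diagram is a tree rooted at `∅`. Every hyperedge `e` lies in a least member, so
the members containing `e` form an upper cone of this tree, and paths do not leave upper cones. -/

/-! ### Hasse diagrams of tree orders -/

section HasseTree

open SimpleGraph

lemma support_subset_support_of_isPath {V : Type*} {G : SimpleGraph V} (hG : G.IsAcyclic) {u v : V}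
    {p : G.Walk u v} (hp : p.IsPath) (q : G.Walk u v) : p.support ⊆ q.support := by
  classical
  have hpq : p = q.bypass :=
    congrArg Subtype.val ((hG.subsingleton_path u v).elim ⟨p, hp⟩ ⟨_, q.bypass_isPath⟩)
  exact hpq ▸ q.support_bypass_subset_support

variable {V : Type*} [PartialOrder V]

lemma exists_walk_hasse_support_subset_Icc [WellFoundedLT V] [IsStronglyCoatomic V] {u v : V}
    (huv : u ≤ v) : ∃ p : (hasse V).Walk v u, ∀ x ∈ p.support, x ∈ Set.Icc u v := by
  induction v using WellFoundedLT.induction with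
  | _ v ih =>
    rcases huv.eq_or_lt with rfl | hlt
    · exact ⟨.nil, by simp⟩
    · obtain ⟨w, huw, hwv⟩ := exists_le_covBy_of_lt hlt
      obtain ⟨p, hp⟩ := ih w hwv.lt huw
      refine ⟨.cons (hasse_adj.2 (.inr hwv)) p, fun x hx => ?_⟩
      rcases List.mem_cons.1 (Walk.support_cons _ p ▸ hx) with rfl | hx
      · exact ⟨huv, le_rfl⟩
      · exact ⟨(hp x hx).1, (hp x hx).2.trans hwv.le⟩

lemma hasse_connected [OrderBot V] [WellFoundedLT V] [IsStronglyCoatomic V] :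
    (hasse V).Connected :=
  (connected_iff_exists_forall_reachable _).2 ⟨⊥, fun v =>
    let ⟨p, _⟩ := exists_walk_hasse_support_subset_Icc (bot_le : ⊥ ≤ v)
    p.reachable.symm⟩

lemma le_of_covBy_of_lt_of_isChain_Iic {a b c : V} (hb : IsChain (· ≤ ·) (Set.Iic b))
    (hab : a ⋖ b) (hcb : c < b) : c ≤ a := by
  rcases hb.total (Set.mem_Iic.2 hab.le) (Set.mem_Iic.2 hcb.le) with hac | hca
  · exact (hab.eq_or_eq hac hcb.le).elim Eq.le fun h => absurd h hcb.ne
  · exact hca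

-- The deleted edge is the only one leaving the upper cone of `v`.
lemma isBridge_hasse_of_covBy (hchain : ∀ v : V, IsChain (· ≤ ·) (Set.Iic v)) {u v : V}
    (huv : u ⋖ v) : (hasse V).IsBridge s(v, u) := by
  have cone_closed : ∀ x, ((hasse V).deleteEdges {s(v, u)}).Reachable v x → v ≤ x := by
    intro x hx
    induction (reachable_iff_reflTransGen _ _).1 hx with
    | refl => exact le_rfl
    | @tail x y hvx hxy ih =>
      have hvx := ih ((reachable_iff_reflTransGen _ _).2 hvx)
      obtain ⟨hxy, hne⟩ := deleteEdges_adj.1 hxy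
      rcases hasse_adj.1 hxy with hxy | hyx
      · exact hvx.trans hxy.le
      · rcases hvx.eq_or_lt with rfl | hlt
        · have huy : u = y := le_antisymm
            (le_of_covBy_of_lt_of_isChain_Iic (hchain v) hyx huv.lt)
            (le_of_covBy_of_lt_of_isChain_Iic (hchain v) huv hyx.lt)
          exact absurd (by rw [huy]; rfl) hne
        · exact le_of_covBy_of_lt_of_isChain_Iic (hchain x) hyx hlt
  exact isBridge_iff.2 fun h => huv.lt.not_ge (cone_closed u h)

lemma hasse_isAcyclic (hchain : ∀ v : V, IsChain (· ≤ ·) (Set.Iic v)) : (hasse V).IsAcyclic := by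
  refine isAcyclic_iff_forall_adj_isBridge.2 fun u v huv => ?_
  rcases hasse_adj.1 huv with huv | hvu
  · exact Sym2.eq_swap ▸ isBridge_hasse_of_covBy hchain huv
  · exact isBridge_hasse_of_covBy hchain hvu

variable [WellFoundedLT V] [IsStronglyCoatomic V]

lemma le_of_mem_support_of_isPath_hasse (hchain : ∀ v : V, IsChain (· ≤ ·) (Set.Iic v))
    {b u v w : V} (hbu : b ≤ u) (hbv : b ≤ v) {p : (hasse V).Walk u v} (hp : p.IsPath)
    (hw : w ∈ p.support) : b ≤ w := by
  obtain ⟨q, hq⟩ := exists_walk_hasse_support_subset_Icc hbu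
  obtain ⟨r, hr⟩ := exists_walk_hasse_support_subset_Icc hbv
  have hw : w ∈ (q.append r.reverse).support :=
    support_subset_support_of_isPath (hasse_isAcyclic hchain) hp _ hw
  rw [Walk.mem_support_append_iff, Walk.support_reverse, List.mem_reverse] at hw
  exact hw.elim (fun h => (hq w h).1) fun h => (hr w h).1

lemma le_of_forall_isPath_hasse_bot_mem_support [OrderBot V] {u v : V}
    (h : ∀ p : (hasse V).Walk v ⊥, p.IsPath → u ∈ p.support) : u ≤ v := by
  classical
  obtain ⟨p, hp⟩ := exists_walk_hasse_support_subset_Icc (bot_le : ⊥ ≤ v)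
  exact (hp u (p.support_bypass_subset_support (h p.bypass p.bypass_isPath))).2

end HasseTree

section Hypergraph

variable {α ι : Type*} {dep : ι → Finset α} {E : Finset ι}

/-- The hierarchy decomposition whose tree is the Hasse diagram of a finite tree order: a partial
order with least element, the root, in which the elements below any given one form a chain. -/
def HierDecomp.ofTreeOrder {V : Type} [Fintype V] [PartialOrder V] [OrderBot V]
    (hchain : ∀ v : V, IsChain (· ≤ ·) (Set.Iic v)) (χ : V → Finset ι) (hχ : Monotone χ)
    (hsub : ∀ v, χ v ⊆ E) (hleast : ∀ e ∈ E, ∃ v, IsLeast {w | e ∈ χ w} v)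
    (hmeet : ∀ e ∈ E, ∀ f ∈ E, (∃ a, a ∈ dep e ∧ a ∈ dep f) → ∃ v, e ∈ χ v ∧ f ∈ χ v) :
    HierDecomp dep E where
  τ := V
  fin := inferInstance
  T := SimpleGraph.hasse V
  tree := ⟨hasse_connected, hasse_isAcyclic hchain⟩
  root := ⊥
  χ := χ
  sub := hsub
  cover e he := (hleast e he).imp fun _ hv => hv.1
  pathconn e u _ hu hv _ hp _ hw :=
    let ⟨_, hb, hmin⟩ := hleast e (hsub u hu)
    hχ (le_of_mem_support_of_isPath_hasse hchain (hmin hu) (hmin hv) hp hw) hb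
  meet := hmeet
  parentMono _ _ _ h := hχ (le_of_forall_isPath_hasse_bot_mem_support h)

/-! ### Elimination families -/

/-- The root-to-node sets of an elimination forest on the hyperedges `E`, together with `∅`: a
family of subsets of `E`, forming a tree under inclusion with root `∅`, such that every hyperedge
enters at a single node (the least member containing it) and intersecting hyperedges lie on a
common branch. -/
structure IsElimFamily (dep : ι → Finset α) (E : Finset ι) (L : Finset (Finset ι)) : Prop where
  empty_mem : ∅ ∈ L
  subset : ∀ S ∈ L, S ⊆ E
  total : ∀ U ∈ L, ∀ S ∈ L, ∀ T ∈ L, S ⊆ U → T ⊆ U → S ⊆ T ∨ T ⊆ S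
  exists_isLeast : ∀ e ∈ E, ∃ S, IsLeast {T | T ∈ L ∧ e ∈ T} S
  meet : ∀ e ∈ E, ∀ f ∈ E, (∃ a, a ∈ dep e ∧ a ∈ dep f) → ∃ S ∈ L, e ∈ S ∧ f ∈ S

namespace IsElimFamily

-- `Shrink` moves the nodes to `Type`, where the nodes of a `HierDecomp` live.
theorem exists_hierDecomp {L : Finset (Finset ι)} (hL : IsElimFamily dep E L) :
    ∃ D : HierDecomp dep E, D.width = L.sup Finset.card := by
  let : OrderBot L := Subtype.orderBot hL.empty_mem
  let : Fintype (Shrink.{0} L) := Fintype.ofEquiv L (equivShrink.{0} L)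
  let e : Shrink.{0} L ≃o L := (orderIsoShrink.{0} L).symm
  let χ : Shrink.{0} L → Finset ι := fun v => (e v).1
  have hnode {S} (hS : S ∈ L) : ∃ v, χ v = S := ⟨e.symm ⟨S, hS⟩, by simp [χ]⟩
  have hmem (v) : χ v ∈ L := (e v).2
  have hle {v w} : χ v ⊆ χ w ↔ v ≤ w := e.le_iff_le
  have hchain (v : Shrink.{0} L) : IsChain (· ≤ ·) (Set.Iic v) := fun u hu w hw _ => by
    simpa only [hle] using hL.total _ (hmem v) _ (hmem u) _ (hmem w) (hle.2 hu) (hle.2 hw)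
  have hleast : ∀ f ∈ E, ∃ v, IsLeast {w | f ∈ χ w} v := fun f hf => by
    obtain ⟨S, ⟨hS, hfS⟩, hmin⟩ := hL.exists_isLeast f hf
    obtain ⟨v, rfl⟩ := hnode hS
    exact ⟨v, hfS, fun w hw => hle.1 (hmin ⟨hmem w, hw⟩)⟩
  refine ⟨.ofTreeOrder hchain χ (fun _ _ h => hle.2 h) (fun v => hL.subset _ (hmem v)) hleast
    fun f hf g hg hfg => ?_, le_antisymm ?_ ?_⟩
  · obtain ⟨S, hS, h⟩ := hL.meet f hf g hg hfg
    obtain ⟨v, rfl⟩ := hnode hS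
    exact ⟨v, h⟩
  · exact Finset.sup_le fun v _ => Finset.le_sup (f := Finset.card) (hmem v)
  · refine Finset.sup_le fun S hS => ?_
    obtain ⟨v, rfl⟩ := hnode hS
    exact Finset.le_sup (f := fun v => (χ v).card) (Finset.mem_univ v)

variable [DecidableEq ι]

lemma exists_isLeast_insert_root {L : Finset (Finset ι)} (hL : IsElimFamily dep E L) {r : ι}
    (hr : r ∉ E) {e : ι} (he : e ∈ insert r E) :
    ∃ S, IsLeast {T | T ∈ insert ∅ (L.image (insert r)) ∧ e ∈ T} S := by
  rcases Finset.mem_insert.1 he with rfl | heE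
  · have hroot : {e} ∈ L.image (insert e) := Finset.mem_image_of_mem (insert e) hL.empty_mem
    exact ⟨{e}, ⟨Finset.mem_insert_of_mem hroot, Finset.mem_singleton_self e⟩,
      fun _ hT => Finset.singleton_subset_iff.2 hT.2⟩
  · obtain ⟨S, ⟨hS, heS⟩, hmin⟩ := hL.exists_isLeast e heE
    refine ⟨insert r S, ⟨Finset.mem_insert_of_mem (Finset.mem_image_of_mem _ hS),
      Finset.mem_insert_of_mem heS⟩, fun T ⟨hT, heT⟩ => ?_⟩
    rcases Finset.mem_insert.1 hT with rfl | hT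
    · exact absurd heT (Finset.notMem_empty e)
    · obtain ⟨T', hT', rfl⟩ := Finset.mem_image.1 hT
      have heT' : e ∈ T' := Finset.mem_of_mem_insert_of_ne heT fun h => hr (h ▸ heE)
      exact Finset.insert_subset_insert r (hmin ⟨hT', heT'⟩)

theorem insert_root {L : Finset (Finset ι)} (hL : IsElimFamily dep E L) {r : ι} (hr : r ∉ E) :
    IsElimFamily dep (insert r E) (insert ∅ (L.image (insert r))) := by
  refine ⟨Finset.mem_insert_self _ _, ?subset, ?total,
    fun _ he => exists_isLeast_insert_root hL hr he, ?meet⟩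
  case subset =>
    simp only [Finset.forall_mem_insert, Finset.forall_mem_image, Finset.empty_subset, true_and]
    exact fun S hS => Finset.insert_subset_insert r (hL.subset S hS)
  case total =>
    simp only [Finset.forall_mem_insert, Finset.forall_mem_image, Finset.empty_subset, true_or,
      or_true, implies_true, true_and, Finset.subset_empty, Finset.insert_ne_empty, false_imp_iff]
    intro U hU S hS T hT hSU hTU
    rw [Finset.insert_subset_insert_iff fun h => hr (hL.subset S hS h)] at hSU
    rw [Finset.insert_subset_insert_iff fun h => hr (hL.subset T hT h)] at hTU
    exact (hL.total U hU S hS T hT hSU hTU).imp (Finset.insert_subset_insert r)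
      (Finset.insert_subset_insert r)
  case meet =>
    have exists_mem_root_mem : ∀ e ∈ insert r E,
        ∃ S ∈ insert ∅ (L.image (insert r)), e ∈ S ∧ r ∈ S := fun e he => by
      obtain ⟨S, ⟨hS, heS⟩, -⟩ := exists_isLeast_insert_root hL hr he
      refine ⟨S, hS, heS, ?_⟩
      rcases Finset.mem_insert.1 hS with rfl | hS
      · exact absurd heS (Finset.notMem_empty e)
      · obtain ⟨S', -, rfl⟩ := Finset.mem_image.1 hS
        exact Finset.mem_insert_self r S'
    intro e he f hf hef
    rcases Finset.mem_insert.1 he with rfl | heE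
    · exact (exists_mem_root_mem f hf).imp fun _ ⟨hS, hfS, heS⟩ => ⟨hS, heS, hfS⟩
    rcases Finset.mem_insert.1 hf with rfl | hfE
    · exact exists_mem_root_mem e he
    obtain ⟨S, hS, heS, hfS⟩ := hL.meet e heE f hfE hef
    exact ⟨insert r S, Finset.mem_insert_of_mem (Finset.mem_image_of_mem _ hS),
      Finset.mem_insert_of_mem heS, Finset.mem_insert_of_mem hfS⟩

lemma mem_of_mem_insert_empty_biUnion {P : Finset (Finset ι)} {L : Finset ι → Finset (Finset ι)}
    (hL : ∀ C ∈ P, IsElimFamily dep C (L C)) (hP : (P : Set (Finset ι)).PairwiseDisjoint id)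
    {C S : Finset ι} (hC : C ∈ P) (hS : S ∈ insert ∅ (P.biUnion L)) {e : ι} (heC : e ∈ C)
    (heS : e ∈ S) : S ∈ L C := by
  rcases Finset.mem_insert.1 hS with rfl | hS
  · exact absurd heS (Finset.notMem_empty e)
  · obtain ⟨D, hD, hSD⟩ := Finset.mem_biUnion.1 hS
    have hDC : D = C := hP.elim_finset hD hC e ((hL D hD).subset S hSD heS) heC
    exact hDC ▸ hSD

theorem biUnion {P : Finset (Finset ι)} {L : Finset ι → Finset (Finset ι)}
    (hL : ∀ C ∈ P, IsElimFamily dep C (L C)) (hP : (P : Set (Finset ι)).PairwiseDisjoint id)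
    (hmeet : ∀ C ∈ P, ∀ D ∈ P, ∀ e ∈ C, ∀ f ∈ D, (∃ a, a ∈ dep e ∧ a ∈ dep f) → C = D) :
    IsElimFamily dep (P.biUnion id) (insert ∅ (P.biUnion L)) := by
  have mem_union {C S} (hC : C ∈ P) (hS : S ∈ L C) : S ∈ insert ∅ (P.biUnion L) :=
    Finset.mem_insert_of_mem (Finset.mem_biUnion.2 ⟨C, hC, hS⟩)
  have subset : ∀ S ∈ insert ∅ (P.biUnion L), S ⊆ P.biUnion id := by
    simp only [Finset.forall_mem_insert, Finset.empty_subset, true_and, Finset.mem_biUnion]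
    rintro S ⟨C, hC, hS⟩
    exact ((hL C hC).subset S hS).trans (Finset.subset_biUnion_of_mem id hC)
  refine ⟨Finset.mem_insert_self _ _, subset, ?total, ?exists_isLeast, ?meet⟩
  case total =>
    intro U hU S hS T hT hSU hTU
    rcases S.eq_empty_or_nonempty with rfl | ⟨e, heS⟩
    · exact .inl T.empty_subset
    rcases T.eq_empty_or_nonempty with rfl | ⟨f, hfT⟩
    · exact .inr S.empty_subset
    obtain ⟨C, hC, heC⟩ := Finset.mem_biUnion.1 (subset S hS heS)
    have hUC := mem_of_mem_insert_empty_biUnion hL hP hC hU heC (hSU heS)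
    have hSC := mem_of_mem_insert_empty_biUnion hL hP hC hS heC heS
    have hfC : f ∈ C := (hL C hC).subset U hUC (hTU hfT)
    have hTC := mem_of_mem_insert_empty_biUnion hL hP hC hT hfC hfT
    exact (hL C hC).total U hUC S hSC T hTC hSU hTU
  case exists_isLeast =>
    intro e he
    obtain ⟨C, hC, heC⟩ := Finset.mem_biUnion.1 he
    obtain ⟨S, ⟨hS, heS⟩, hmin⟩ := (hL C hC).exists_isLeast e heC
    exact ⟨S, ⟨mem_union hC hS, heS⟩, fun T ⟨hT, heT⟩ =>
      hmin ⟨mem_of_mem_insert_empty_biUnion hL hP hC hT heC heT, heT⟩⟩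
  case meet =>
    intro e he f hf hef
    obtain ⟨C, hC, heC⟩ := Finset.mem_biUnion.1 he
    obtain ⟨D, hD, hfD⟩ := Finset.mem_biUnion.1 hf
    obtain rfl := hmeet C hC D hD e heC f hfD hef
    obtain ⟨S, hS, h⟩ := (hL C hC).meet e heC f hfD hef
    exact ⟨S, mem_union hC hS, h⟩

end IsElimFamily

lemma sup_card_insert_empty_image_insert [DecidableEq ι] {L : Finset (Finset ι)}
    (hL : L.Nonempty) {r : ι} (hr : ∀ S ∈ L, r ∉ S) :
    (insert ∅ (L.image (insert r))).sup Finset.card = 1 + L.sup Finset.card :=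
  calc (insert ∅ (L.image (insert r))).sup Finset.card
      = L.sup fun S => (insert r S).card := by simp [Finset.sup_image, Function.comp_def]
    _ = L.sup fun S => 1 + S.card :=
        Finset.sup_congr rfl fun S hS => by rw [Finset.card_insert_of_notMem (hr S hS), add_comm]
    _ = 1 + L.sup Finset.card := (Finset.add_sup hL _ 1).symm

/-! ### Components and the recursion for the hierarchy width -/

lemma edgeConn_symm {e f : ι} (h : EdgeConn dep E e f) : EdgeConn dep E f e :=
  Relation.ReflTransGen.mono (fun _ _ ⟨hb, ha, v, hvb, hva⟩ => ⟨ha, hb, v, hva, hvb⟩) _ _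
    (Relation.reflTransGen_swap.2 h)

open Classical in
/-- The connected component of the hyperedge `e`, as a set of hyperedges. It is a filter, as in
`hw`, so that the recursion for `hw` unfolds to it. -/
noncomputable def edgeComp (dep : ι → Finset α) (E : Finset ι) (e : ι) : Finset ι :=
  E.filter fun f => EdgeConn dep E e f

lemma mem_edgeComp {e f : ι} : f ∈ edgeComp dep E e ↔ f ∈ E ∧ EdgeConn dep E e f := by
  simp [edgeComp]

lemma self_mem_edgeComp {e : ι} (he : e ∈ E) : e ∈ edgeComp dep E e :=
  mem_edgeComp.2 ⟨he, .refl⟩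

lemma edgeComp_subset {e : ι} : edgeComp dep E e ⊆ E := fun _ h => (mem_edgeComp.1 h).1

lemma edgeComp_eq_of_edgeConn {e f : ι} (h : EdgeConn dep E e f) :
    edgeComp dep E e = edgeComp dep E f := by
  ext g
  simp only [mem_edgeComp]
  exact and_congr_right fun _ => ⟨(edgeConn_symm h).trans, h.trans⟩

variable [DecidableEq ι]

/-- The connected components of a hypergraph, as sets of hyperedges. -/
noncomputable def edgeComps (dep : ι → Finset α) (E : Finset ι) : Finset (Finset ι) :=
  E.image (edgeComp dep E)

lemma eq_edgeComp_of_mem {C : Finset ι} (hC : C ∈ edgeComps dep E) {e : ι} (he : e ∈ C) :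
    C = edgeComp dep E e := by
  obtain ⟨f, -, rfl⟩ := Finset.mem_image.1 hC
  exact edgeComp_eq_of_edgeConn (mem_edgeComp.1 he).2

lemma subset_of_mem_edgeComps {C : Finset ι} (hC : C ∈ edgeComps dep E) : C ⊆ E := by
  obtain ⟨e, -, rfl⟩ := Finset.mem_image.1 hC
  exact edgeComp_subset

lemma nonempty_of_mem_edgeComps {C : Finset ι} (hC : C ∈ edgeComps dep E) : C.Nonempty := by
  obtain ⟨e, he, rfl⟩ := Finset.mem_image.1 hC
  exact ⟨e, self_mem_edgeComp he⟩

lemma biUnion_edgeComps : (edgeComps dep E).biUnion id = E := by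
  refine (Finset.biUnion_subset.2 fun _ => subset_of_mem_edgeComps).antisymm fun e he => ?_
  exact Finset.mem_biUnion.2 ⟨edgeComp dep E e, Finset.mem_image_of_mem _ he, self_mem_edgeComp he⟩

lemma pairwiseDisjoint_edgeComps :
    (edgeComps dep E : Set (Finset ι)).PairwiseDisjoint id := fun _ hC _ hD hne =>
  Finset.disjoint_left.2 fun _ heC heD =>
    hne ((eq_edgeComp_of_mem hC heC).trans (eq_edgeComp_of_mem hD heD).symm)

lemma edgeComps_eq_of_meet {C D : Finset ι} (hC : C ∈ edgeComps dep E)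
    (hD : D ∈ edgeComps dep E) {e f : ι} (he : e ∈ C) (hf : f ∈ D)
    (hef : ∃ a, a ∈ dep e ∧ a ∈ dep f) : C = D := by
  have hconn : EdgeConn dep E e f :=
    .single ⟨subset_of_mem_edgeComps hC he, subset_of_mem_edgeComps hD hf, hef⟩
  rw [eq_edgeComp_of_mem hC he, eq_edgeComp_of_mem hD hf, edgeComp_eq_of_edgeConn hconn]

/-- The value that the recursion for `hw` assigns to a connected hypergraph `C`. The minimum is
taken in `ℕ∞`, as in `hw`; it is `⊤` only for empty `C`. -/
noncomputable def connectedHw (dep : ι → Finset α) (C : Finset ι) : ℕ :=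
  1 + (C.inf fun f => (hw dep (C.erase f) : ℕ∞)).toNat

lemma hw_eq_sup_edgeComps : hw dep E = (edgeComps dep E).sup (connectedHw dep) := by
  rw [hw, edgeComps, Finset.sup_image]
  refine Finset.sup_congr rfl fun e _ => ?_
  exact congrArg (1 + ENat.toNat ·)
    (Finset.inf_attach (edgeComp dep E e) fun f => (hw dep ((edgeComp dep E e).erase f) : ℕ∞))

lemma exists_mem_connectedHw_eq {C : Finset ι} (hC : C.Nonempty) :
    ∃ r ∈ C, connectedHw dep C = 1 + hw dep (C.erase r) := by
  obtain ⟨r, hr, hinf⟩ := Finset.exists_mem_eq_inf C hC fun f => (hw dep (C.erase f) : ℕ∞)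
  exact ⟨r, hr, by rw [connectedHw, hinf, ENat.toNat_natCast]⟩

theorem exists_isElimFamily (dep : ι → Finset α) (E : Finset ι) :
    ∃ L, IsElimFamily dep E L ∧ L.sup Finset.card = hw dep E := by
  induction E using Finset.strongInduction with
  | H E ih =>
    have hcomp : ∀ C ∈ edgeComps dep E,
        ∃ L, IsElimFamily dep C L ∧ L.sup Finset.card = connectedHw dep C := by
      intro C hC
      obtain ⟨r, hr, hCr⟩ := exists_mem_connectedHw_eq (dep := dep) (nonempty_of_mem_edgeComps hC)
      obtain ⟨L, hL, hcard⟩ :=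
        ih (C.erase r) ((Finset.erase_ssubset hr).trans_subset (subset_of_mem_edgeComps hC))
      refine ⟨_, Finset.insert_erase hr ▸ hL.insert_root (Finset.notMem_erase r C), ?_⟩
      rw [hCr, ← hcard]
      exact sup_card_insert_empty_image_insert ⟨∅, hL.empty_mem⟩
        fun S hS hrS => Finset.notMem_erase r C (hL.subset S hS hrS)
    choose! L hL hcard using hcomp
    refine ⟨insert ∅ ((edgeComps dep E).biUnion L), ?_, ?_⟩
    · have hunion := IsElimFamily.biUnion hL pairwiseDisjoint_edgeComps
        fun _ hC _ hD _ he _ hf => edgeComps_eq_of_meet hC hD he hf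
      rwa [biUnion_edgeComps] at hunion
    · rw [Finset.sup_insert, Finset.card_empty, Nat.zero_max, Finset.sup_biUnion,
        hw_eq_sup_edgeComps]
      exact Finset.sup_congr rfl hcard

end Hypergraph

/-- Every hypergraph `G` has a hierarchy decomposition whose width equals the hierarchy
width of `G`. -/
theorem stmt17 {α ι : Type*} [DecidableEq ι] (dep : ι → Finset α) (E : Finset ι) :
    ∃ D : HierDecomp dep E, D.width = hw dep E := by
  obtain ⟨L, hL, hcard⟩ := exists_isElimFamily dep E
  obtain ⟨D, hD⟩ := hL.exists_hierDecomp
  exact ⟨D, hD.trans hcard⟩
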